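/- Let N ≥ 1, m > k ≥ 1, and let a = t₀ < t₁ < … < t_n = b be a partition with h_j = t_j − t_{j−1}. Let p₀,…,p_{N−1} be a basis of the polynomials of degree ≤ N−1 on [0,1], p̄₀ = 1 and p̄ᵢ(τ) = ∫₀^τ p_{i−1}(σ)dσ. For a coefficient vector c = (c_{jκl}), define the piecewise polynomial function x = ℛc : [a,b) → ℝ^m by: for t ∈ [t_{j−1},t_j), x_κ(t) = Σ_{l=0}^{N} c_{jκl} h_j p̄_l((t−t_{j−1})/h_j) for κ = 1,…,k, and x_κ(t) = Σ_{l=0}^{N−1} c_{jκl} p_l((t−t_{j−1})/h_j) for κ = k+1,…,m. Let (σᵢ,γᵢ)_{i=1..N} be a quadrature with positive weights exact for degree 2N−2 and (σ̄ᵢ,γ̄ᵢ)_{i=1..N+1} a quadrature with positive weights exact for degree 2N; define V_{iα} = p_{α−1}(σᵢ), V̄_{iα} = p̄_{α−1}(σ̄ᵢ), V̊_{iα} = p̄′_{α−1}(σ̄ᵢ), Γ = diag(γᵢ^{1/2}), Γ̄ = diag(γ̄ᵢ^{1/2}), U_j = blockdiag(I_k ⊗ h_j^{3/2}Γ̄V̄,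 I_{m−k} ⊗ h_j^{1/2}ΓV), 𝒰 = blockdiag(U₁,…,U_n), Û_j = blockdiag(I_k ⊗ [h_j^{3/2}Γ̄V̄ stacked above h_j^{1/2}Γ̄V̊], I_{m−k} ⊗ h_j^{1/2}ΓV), 𝒰̂ = blockdiag(Û₁,…,Û_n). Then for every c: Σ_{j=1}^n Σ_{κ=1}^m ∫_{t_{j−1}}^{t_j} |x_κ(t)|² dt = |𝒰c|², and Σ_{j=1}^n { Σ_{κ=1}^k ∫_{t_{j−1}}^{t_j} (|x_κ(t)|² + |x_κ′(t)|²) dt + Σ_{κ=k+1}^m ∫_{t_{j−1}}^{t_j} |x_κ(t)|² dt } = |𝒰̂c|², where x_κ′ is the piecewise derivative and |·| denotes the Euclidean norm. -/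

import Mathlib

open MeasureTheory Matrix Polynomial
open scoped BigOperators

/-- `p̄₀ = 1`, `p̄ᵢ(τ) = ∫₀^τ p_{i-1}(σ) dσ`. -/
noncomputable def pbarEval (p : ℕ → Polynomial ℝ) : ℕ → ℝ → ℝ
  | 0, _ => 1
  | i + 1, τ => ∫ s in (0:ℝ)..τ, (p i).eval s

/-- A quadrature rule on `[0,1]` with nodes `0 ≤ σ₁ < … < σ_M ≤ 1` and positive weights,
exact for all polynomials of degree `≤ d`. -/
def IsQuad {M : ℕ} (σ γ : Fin M → ℝ) (d : ℕ) : Prop :=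
  (∀ i, σ i ∈ Set.Icc (0:ℝ) 1) ∧ StrictMono σ ∧ (∀ i, 0 < γ i) ∧
    ∀ q : Polynomial ℝ, q.natDegree ≤ d →
      ∑ i, γ i * q.eval (σ i) = ∫ s in (0:ℝ)..1, q.eval s

/-- Row/column index type for the block matrix `𝒰` (also the index type of coefficient
vectors `c`): block `j`, then either a "differential" index `(κ, l)` with `l : Fin (N+1)`
or an "algebraic" index with `l : Fin N`. -/
abbrev UIdx (N m k n : ℕ) := Fin n × (Fin k × Fin (N + 1) ⊕ Fin (m - k) × Fin N)

/-- Row index type for `𝒰̂`: in each differential block the rows of `h^{3/2}Γ̄V̄`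
are stacked above the rows of `h^{1/2}Γ̄V̊`. -/
abbrev UhIdx (N m k n : ℕ) := Fin n × (Fin k × (Fin (N + 1) ⊕ Fin (N + 1)) ⊕ Fin (m - k) × Fin N)

/-- `𝒰 = blockdiag(U₁,…,U_n)`, `U_j = blockdiag(I_k ⊗ h_j^{3/2}Γ̄V̄, I_{m-k} ⊗ h_j^{1/2}ΓV)`. -/
noncomputable def Umat (N m k n : ℕ) (p : ℕ → Polynomial ℝ) (h : Fin n → ℝ)
    (σ γ : Fin N → ℝ) (σb γb : Fin (N + 1) → ℝ) :
    Matrix (UIdx N m k n) (UIdx N m k n) ℝ :=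
  Matrix.of fun x y =>
    match x, y with
    | (j, Sum.inl (κ, i)), (j', Sum.inl (κ', α)) =>
        if j = j' ∧ κ = κ' then
          h j ^ ((3:ℝ)/2) * Real.sqrt (γb i) * pbarEval p (α : ℕ) (σb i) else 0
    | (j, Sum.inr (κ, i)), (j', Sum.inr (κ', α)) =>
        if j = j' ∧ κ = κ' then
          h j ^ ((1:ℝ)/2) * Real.sqrt (γ i) * (p (α : ℕ)).eval (σ i) else 0
    | _, _ => 0

/-- `𝒰̂ = blockdiag(Û₁,…,Û_n)`, where `Û_j` has the blocks `h_j^{3/2}Γ̄V̄` stacked above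
`h_j^{1/2}Γ̄V̊` in the differential part (`V̊_{iα} = p̄'_{α-1}(σ̄ᵢ)`), and
`I_{m-k} ⊗ h_j^{1/2}ΓV` in the algebraic part. -/
noncomputable def Uhmat (N m k n : ℕ) (p : ℕ → Polynomial ℝ) (h : Fin n → ℝ)
    (σ γ : Fin N → ℝ) (σb γb : Fin (N + 1) → ℝ) :
    Matrix (UhIdx N m k n) (UIdx N m k n) ℝ :=
  Matrix.of fun x y =>
    match x, y with
    | (j, Sum.inl (κ, Sum.inl i)), (j', Sum.inl (κ', α)) =>
        if j = j' ∧ κ = κ' then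
          h j ^ ((3:ℝ)/2) * Real.sqrt (γb i) * pbarEval p (α : ℕ) (σb i) else 0
    | (j, Sum.inl (κ, Sum.inr i)), (j', Sum.inl (κ', α)) =>
        if j = j' ∧ κ = κ' then
          h j ^ ((1:ℝ)/2) * Real.sqrt (γb i) * deriv (pbarEval p (α : ℕ)) (σb i) else 0
    | (j, Sum.inr (κ, i)), (j', Sum.inr (κ', α)) =>
        if j = j' ∧ κ = κ' then
          h j ^ ((1:ℝ)/2) * Real.sqrt (γ i) * (p (α : ℕ)).eval (σ i) else 0
    | _, _ => 0

/-- The differential components (`κ = 1,…,k`) of `x = ℛc` on the subinterval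
`[t_{j-1}, t_j)`:  `x_κ(s) = Σ_{l=0}^{N} c_{jκl} · h_j · p̄_l((s - t_{j-1})/h_j)`. -/
noncomputable def xdiff (N m k n : ℕ) (p : ℕ → Polynomial ℝ) (t : ℕ → ℝ)
    (c : UIdx N m k n → ℝ) (j : Fin n) (κ : Fin k) (s : ℝ) : ℝ :=
  ∑ l : Fin (N + 1), c (j, Sum.inl (κ, l)) *
    ((t ((j : ℕ) + 1) - t (j : ℕ)) *
      pbarEval p (l : ℕ) ((s - t (j : ℕ)) / (t ((j : ℕ) + 1) - t (j : ℕ))))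

/-- The algebraic components (`κ = k+1,…,m`) of `x = ℛc` on the subinterval
`[t_{j-1}, t_j)`:  `x_κ(s) = Σ_{l=0}^{N-1} c_{jκl} · p_l((s - t_{j-1})/h_j)`. -/
noncomputable def xalg (N m k n : ℕ) (p : ℕ → Polynomial ℝ) (t : ℕ → ℝ)
    (c : UIdx N m k n → ℝ) (j : Fin n) (κ : Fin (m - k)) (s : ℝ) : ℝ :=
  ∑ l : Fin N, c (j, Sum.inr (κ, l)) *
    (p (l : ℕ)).eval ((s - t (j : ℕ)) / (t ((j : ℕ) + 1) - t (j : ℕ)))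

/-- `‖ℛc‖²_{L²}`. -/
noncomputable def normL2sq (N m k n : ℕ) (p : ℕ → Polynomial ℝ) (t : ℕ → ℝ)
    (c : UIdx N m k n → ℝ) : ℝ :=
  ∑ j : Fin n,
    ((∑ κ : Fin k, ∫ s in t (j : ℕ)..t ((j : ℕ) + 1), (xdiff N m k n p t c j κ s) ^ 2) +
     ∑ κ : Fin (m - k), ∫ s in t (j : ℕ)..t ((j : ℕ) + 1), (xalg N m k n p t c j κ s) ^ 2)

/-- `‖ℛc‖²_{H¹_{D,π}}` (with piecewise derivatives of the differential components). -/
noncomputable def normH1sq (N m k n : ℕ) (p : ℕ → Polynomial ℝ) (t : ℕ → ℝ)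
    (c : UIdx N m k n → ℝ) : ℝ :=
  ∑ j : Fin n,
    ((∑ κ : Fin k, ∫ s in t (j : ℕ)..t ((j : ℕ) + 1),
        ((xdiff N m k n p t c j κ s) ^ 2 + (deriv (xdiff N m k n p t c j κ) s) ^ 2)) +
     ∑ κ : Fin (m - k), ∫ s in t (j : ℕ)..t ((j : ℕ) + 1), (xalg N m k n p t c j κ s) ^ 2)

/-!
Everything reduces to the reference interval `[0,1]`. On each subinterval a component of `ℛc` is an
affinely rescaled polynomial, of degree at most `N` for a differential component and at most `N - 1`
for its derivative and for an algebraic component. The squares therefore have degrees at most `2N`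
and `2N - 2`, the quadrature rules integrate them exactly, and each quadrature term
`h γᵢ P(σᵢ)²` is the square of the entry `h^{1/2} γᵢ^{1/2} P(σᵢ)` of `𝒰c` or `𝒰̂c`. The extra factor
`h` in the differential components accounts for the exponent `3/2`.
-/

section Antiderivative

variable {K : Type*} [Field K]

/-- The antiderivative without constant term of a polynomial over a field of characteristic zero.
In characteristic `p` the terms of degree divisible by `p` get the junk coefficient `0`. -/
noncomputable def antiderivative (q : K[X]) : K[X] :=
  ∑ i ∈ Finset.range (q.natDegree + 1), C (q.coeff i / (i + 1)) * X ^ (i + 1)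

lemma derivative_antiderivative [CharZero K] (q : K[X]) :
    derivative (antiderivative q) = q := by
  conv_rhs => rw [q.as_sum_range_C_mul_X_pow]
  rw [antiderivative, derivative_sum]
  refine Finset.sum_congr rfl fun i _ => ?_
  rw [derivative_C_mul_X_pow, Nat.cast_succ, div_mul_cancel₀ _ (Nat.cast_add_one_ne_zero i),
    Nat.add_sub_cancel]

lemma natDegree_antiderivative_le (q : K[X]) :
    (antiderivative q).natDegree ≤ q.natDegree + 1 :=
  natDegree_sum_le_of_forall_le _ _ fun _ hi =>
    (natDegree_C_mul_X_pow_le _ _).trans (Finset.mem_range.1 hi)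

lemma eval_zero_antiderivative (q : K[X]) : (antiderivative q).eval 0 = 0 := by
  simp [antiderivative, eval_finsetSum]

lemma integral_eval_eq_eval_antiderivative (q : ℝ[X]) (x : ℝ) :
    ∫ s in (0 : ℝ)..x, q.eval s = (antiderivative q).eval x := by
  rw [intervalIntegral.integral_eq_sub_of_hasDerivAt (f := fun s => (antiderivative q).eval s),
    eval_zero_antiderivative, sub_zero]
  · intro s _
    simpa only [derivative_antiderivative] using (antiderivative q).hasDerivAt s
  · exact q.continuous.intervalIntegrable _ _

end Antiderivative

lemma deriv_mul_eval_sub_div (P : ℝ[X]) {h : ℝ} (hh : h ≠ 0) (a s : ℝ) :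
    deriv (fun s => h * P.eval ((s - a) / h)) s = P.derivative.eval ((s - a) / h) := by
  have rescaling : HasDerivAt (fun s : ℝ => (s - a) / h) (1 / h) s :=
    ((hasDerivAt_id s).sub_const a).div_const h
  refine (((P.hasDerivAt _).comp s rescaling).const_mul h).deriv.trans ?_
  field_simp

/-- Exactness in degree `≤ d` of the quadrature rule on `[0,1]` with nodes `σ` and weights `γ`,
without the constraints on nodes and weights in `IsQuad`. -/
def IsExactQuad {ι : Type*} [Fintype ι] (σ γ : ι → ℝ) (d : ℕ) : Prop :=
  ∀ q : ℝ[X], q.natDegree ≤ d → ∑ i, γ i * q.eval (σ i) = ∫ s in (0 : ℝ)..1, q.eval s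

namespace IsExactQuad

variable {ι : Type*} [Fintype ι] {σ γ : ι → ℝ} {a b : ℝ}

lemma mono {d e : ℕ} (hq : IsExactQuad σ γ d) (hed : e ≤ d) : IsExactQuad σ γ e :=
  fun q hqe => hq q (hqe.trans hed)

lemma integral_eval_sub_div {d : ℕ} (hq : IsExactQuad σ γ d) (hab : a ≠ b) {P : ℝ[X]}
    (hP : P.natDegree ≤ d) :
    ∫ s in a..b, P.eval ((s - a) / (b - a)) = (b - a) * ∑ i, γ i * P.eval (σ i) := by
  have hne : b - a ≠ 0 := sub_ne_zero.2 hab.symm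
  simp only [hq P hP, sub_div _ a]
  rw [intervalIntegral.integral_comp_div_sub (fun x => P.eval x) hne, ← sub_div, ← sub_div,
    sub_self, zero_div, div_self hne, smul_eq_mul]

lemma integral_sq_eval_sub_div {e : ℕ} (hq : IsExactQuad σ γ (2 * e)) (hγ : ∀ i, 0 ≤ γ i)
    (hab : a < b) {P : ℝ[X]} (hP : P.natDegree ≤ e) :
    ∫ s in a..b, P.eval ((s - a) / (b - a)) ^ 2 =
      ∑ i, ((b - a) ^ ((1 : ℝ) / 2) * √(γ i) * P.eval (σ i)) ^ 2 := by
  have exact := hq.integral_eval_sub_div hab.ne (natDegree_pow_le_of_le 2 hP)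
  simp only [eval_pow] at exact
  rw [exact, Finset.mul_sum]
  refine Finset.sum_congr rfl fun i _ => ?_
  rw [mul_pow, mul_pow, ← Real.sqrt_eq_rpow, Real.sq_sqrt (sub_nonneg.2 hab.le),
    Real.sq_sqrt (hγ i), mul_assoc]

lemma integral_sq_mul_eval_sub_div {e : ℕ} (hq : IsExactQuad σ γ (2 * e)) (hγ : ∀ i, 0 ≤ γ i)
    (hab : a < b) {P : ℝ[X]} (hP : P.natDegree ≤ e) :
    ∫ s in a..b, ((b - a) * P.eval ((s - a) / (b - a))) ^ 2 =
      ∑ i, ((b - a) ^ ((3 : ℝ) / 2) * √(γ i) * P.eval (σ i)) ^ 2 := by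
  have scaled := hq.integral_sq_eval_sub_div hγ hab ((natDegree_C_mul_le (b - a) P).trans hP)
  have rpow_three_half : (b - a) ^ ((3 : ℝ) / 2) = (b - a) * (b - a) ^ ((1 : ℝ) / 2) := by
    rw [← Real.rpow_one_add' (sub_nonneg.2 hab.le) (by norm_num)]
    norm_num
  simp only [eval_mul, eval_C] at scaled
  rw [scaled, rpow_three_half]
  exact Finset.sum_congr rfl fun i _ => by ring

end IsExactQuad

section ReferencePolynomials

/-- The polynomials `p̄ᵢ`, whose values are given by `pbarEval`. -/
noncomputable def pbarPoly (p : ℕ → ℝ[X]) : ℕ → ℝ[X]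
  | 0 => 1
  | i + 1 => antiderivative (p i)

lemma pbarEval_eq_eval_pbarPoly (p : ℕ → ℝ[X]) (i : ℕ) :
    pbarEval p i = fun x => (pbarPoly p i).eval x := by
  funext x
  cases i with
  | zero => exact eval_one.symm
  | succ i => exact integral_eval_eq_eval_antiderivative (p i) x

lemma natDegree_pbarPoly_le {N : ℕ} {p : ℕ → ℝ[X]} (hdeg : ∀ i < N, (p i).natDegree ≤ N - 1)
    {i : ℕ} (hi : i ≤ N) : (pbarPoly p i).natDegree ≤ N := by
  cases i with
  | zero => exact natDegree_one.trans_le N.zero_le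
  | succ i =>
    have hp := hdeg i (by lia)
    have hpbar := natDegree_antiderivative_le (p i)
    simp only [pbarPoly]
    lia

variable {N m k n : ℕ} (p : ℕ → ℝ[X]) (t : ℕ → ℝ) (c : UIdx N m k n → ℝ) (j : Fin n)

/-- The polynomial `∑ₗ c_{jκl} p̄_l` on `[0,1]` which, rescaled to `[t_{j-1}, t_j)` and multiplied
by `h_j`, is the differential component `κ` of `ℛc`. -/
noncomputable def diffPoly (κ : Fin k) : ℝ[X] :=
  ∑ l : Fin (N + 1), C (c (j, Sum.inl (κ, l))) * pbarPoly p l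

/-- The polynomial `∑ₗ c_{jκl} p_l` on `[0,1]` which, rescaled to `[t_{j-1}, t_j)`, is the algebraic
component `κ` of `ℛc`. -/
noncomputable def algPoly (κ : Fin (m - k)) : ℝ[X] :=
  ∑ l : Fin N, C (c (j, Sum.inr (κ, l))) * p l

lemma eval_diffPoly (κ : Fin k) (x : ℝ) :
    (diffPoly p c j κ).eval x = ∑ l : Fin (N + 1), c (j, Sum.inl (κ, l)) * pbarEval p l x := by
  simp only [diffPoly, eval_finsetSum, eval_mul, eval_C, pbarEval_eq_eval_pbarPoly]

lemma eval_derivative_diffPoly (κ : Fin k) (x : ℝ) :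
    (diffPoly p c j κ).derivative.eval x =
      ∑ l : Fin (N + 1), c (j, Sum.inl (κ, l)) * deriv (pbarEval p l) x := by
  simp only [diffPoly, derivative_sum, derivative_C_mul, eval_finsetSum, eval_mul, eval_C,
    pbarEval_eq_eval_pbarPoly, Polynomial.deriv]

lemma eval_algPoly (κ : Fin (m - k)) (x : ℝ) :
    (algPoly p c j κ).eval x = ∑ l : Fin N, c (j, Sum.inr (κ, l)) * (p l).eval x := by
  simp only [algPoly, eval_finsetSum, eval_mul, eval_C]

lemma xdiff_eq_mul_eval_diffPoly (κ : Fin k) :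
    xdiff N m k n p t c j κ = fun s =>
      (t (j + 1) - t j) * (diffPoly p c j κ).eval ((s - t j) / (t (j + 1) - t j)) := by
  funext s
  rw [eval_diffPoly, Finset.mul_sum]
  exact Finset.sum_congr rfl fun l _ => mul_left_comm _ _ _

lemma deriv_xdiff (hj : t j < t (j + 1)) (κ : Fin k) :
    deriv (xdiff N m k n p t c j κ) = fun s =>
      (diffPoly p c j κ).derivative.eval ((s - t j) / (t (j + 1) - t j)) := by
  funext s
  rw [xdiff_eq_mul_eval_diffPoly, deriv_mul_eval_sub_div _ (sub_pos.2 hj).ne']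

lemma xalg_eq_eval_algPoly (κ : Fin (m - k)) :
    xalg N m k n p t c j κ = fun s =>
      (algPoly p c j κ).eval ((s - t j) / (t (j + 1) - t j)) := by
  funext s
  rw [eval_algPoly, xalg]

lemma natDegree_diffPoly_le {p : ℕ → ℝ[X]} (hdeg : ∀ i < N, (p i).natDegree ≤ N - 1)
    (κ : Fin k) : (diffPoly p c j κ).natDegree ≤ N :=
  natDegree_sum_le_of_forall_le _ _ fun l _ =>
    (natDegree_C_mul_le _ _).trans (natDegree_pbarPoly_le hdeg l.is_le)

lemma natDegree_algPoly_le {p : ℕ → ℝ[X]} (hdeg : ∀ i < N, (p i).natDegree ≤ N - 1)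
    (κ : Fin (m - k)) : (algPoly p c j κ).natDegree ≤ N - 1 :=
  natDegree_sum_le_of_forall_le _ _ fun l _ => (natDegree_C_mul_le _ _).trans (hdeg l l.2)

end ReferencePolynomials

section BlockRows

variable {J K A B R : Type*} [Fintype J] [DecidableEq J] [Fintype K] [DecidableEq K] [Fintype A]
  [Fintype B] [CommSemiring R] {a : R} {f : A → R} {j : J} {κ : K}

lemma dotProduct_eq_mul_sum_inl {v : J × (K × A ⊕ B) → R}
    (hinl : ∀ j' κ' α, v (j', Sum.inl (κ', α)) = if j = j' ∧ κ = κ' then a * f α else 0)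
    (hinr : ∀ j' β, v (j', Sum.inr β) = 0) (w : J × (K × A ⊕ B) → R) :
    v ⬝ᵥ w = a * ∑ α, w (j, Sum.inl (κ, α)) * f α := by
  simp only [dotProduct, Fintype.sum_prod_type, Fintype.sum_sum_type, hinl, hinr, ite_and, ite_mul,
    zero_mul, Finset.sum_const_zero, add_zero, Finset.sum_ite_irrel, Finset.sum_ite_eq,
    Finset.mem_univ, if_true, Finset.mul_sum, mul_assoc, mul_comm (w _)]

lemma dotProduct_eq_mul_sum_inr {v : J × (B ⊕ K × A) → R}
    (hinl : ∀ j' β, v (j', Sum.inl β) = 0)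
    (hinr : ∀ j' κ' α, v (j', Sum.inr (κ', α)) = if j = j' ∧ κ = κ' then a * f α else 0)
    (w : J × (B ⊕ K × A) → R) :
    v ⬝ᵥ w = a * ∑ α, w (j, Sum.inr (κ, α)) * f α := by
  simp only [dotProduct, Fintype.sum_prod_type, Fintype.sum_sum_type, hinl, hinr, ite_and, ite_mul,
    zero_mul, Finset.sum_const_zero, zero_add, Finset.sum_ite_irrel, Finset.sum_ite_eq,
    Finset.mem_univ, if_true, Finset.mul_sum, mul_assoc, mul_comm (w _)]

end BlockRows

section MatrixVectorProducts

variable {N m k n : ℕ} (p : ℕ → ℝ[X]) (h : Fin n → ℝ) (σ γ : Fin N → ℝ)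
  (σb γb : Fin (N + 1) → ℝ) (c : UIdx N m k n → ℝ) (j : Fin n)

lemma Umat_mulVec_inl (κ : Fin k) (i : Fin (N + 1)) :
    (Umat N m k n p h σ γ σb γb).mulVec c (j, Sum.inl (κ, i)) =
      h j ^ ((3 : ℝ) / 2) * √(γb i) * (diffPoly p c j κ).eval (σb i) := by
  rw [eval_diffPoly]
  exact dotProduct_eq_mul_sum_inl (fun _ _ _ => rfl) (fun _ _ => rfl) c

lemma Umat_mulVec_inr (κ : Fin (m - k)) (i : Fin N) :
    (Umat N m k n p h σ γ σb γb).mulVec c (j, Sum.inr (κ, i)) =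
      h j ^ ((1 : ℝ) / 2) * √(γ i) * (algPoly p c j κ).eval (σ i) := by
  rw [eval_algPoly]
  exact dotProduct_eq_mul_sum_inr (fun _ _ => rfl) (fun _ _ _ => rfl) c

lemma Uhmat_mulVec_inl_inl (κ : Fin k) (i : Fin (N + 1)) :
    (Uhmat N m k n p h σ γ σb γb).mulVec c (j, Sum.inl (κ, Sum.inl i)) =
      h j ^ ((3 : ℝ) / 2) * √(γb i) * (diffPoly p c j κ).eval (σb i) := by
  rw [eval_diffPoly]
  exact dotProduct_eq_mul_sum_inl (fun _ _ _ => rfl) (fun _ _ => rfl) c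

lemma Uhmat_mulVec_inl_inr (κ : Fin k) (i : Fin (N + 1)) :
    (Uhmat N m k n p h σ γ σb γb).mulVec c (j, Sum.inl (κ, Sum.inr i)) =
      h j ^ ((1 : ℝ) / 2) * √(γb i) * (diffPoly p c j κ).derivative.eval (σb i) := by
  rw [eval_derivative_diffPoly]
  exact dotProduct_eq_mul_sum_inl (fun _ _ _ => rfl) (fun _ _ => rfl) c

lemma Uhmat_mulVec_inr (κ : Fin (m - k)) (i : Fin N) :
    (Uhmat N m k n p h σ γ σb γb).mulVec c (j, Sum.inr (κ, i)) =
      h j ^ ((1 : ℝ) / 2) * √(γ i) * (algPoly p c j κ).eval (σ i) := by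
  rw [eval_algPoly]
  exact dotProduct_eq_mul_sum_inr (fun _ _ => rfl) (fun _ _ _ => rfl) c

end MatrixVectorProducts

section ComponentNorms

variable {N m k n : ℕ} {p : ℕ → ℝ[X]} {t : ℕ → ℝ} {j : Fin n} (c : UIdx N m k n → ℝ)

lemma integral_sq_xdiff {ι : Type*} [Fintype ι] {σ γ : ι → ℝ}
    (hdeg : ∀ i < N, (p i).natDegree ≤ N - 1) (hj : t j < t (j + 1)) (hγ : ∀ i, 0 ≤ γ i)
    (hq : IsExactQuad σ γ (2 * N)) (κ : Fin k) :
    ∫ s in t j..t (j + 1), xdiff N m k n p t c j κ s ^ 2 =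
      ∑ i, ((t (j + 1) - t j) ^ ((3 : ℝ) / 2) * √(γ i) * (diffPoly p c j κ).eval (σ i)) ^ 2 := by
  rw [xdiff_eq_mul_eval_diffPoly]
  exact hq.integral_sq_mul_eval_sub_div hγ hj (natDegree_diffPoly_le c j hdeg κ)

lemma integral_sq_deriv_xdiff {ι : Type*} [Fintype ι] {σ γ : ι → ℝ}
    (hdeg : ∀ i < N, (p i).natDegree ≤ N - 1) (hj : t j < t (j + 1)) (hγ : ∀ i, 0 ≤ γ i)
    (hq : IsExactQuad σ γ (2 * (N - 1))) (κ : Fin k) :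
    ∫ s in t j..t (j + 1), deriv (xdiff N m k n p t c j κ) s ^ 2 =
      ∑ i, ((t (j + 1) - t j) ^ ((1 : ℝ) / 2) * √(γ i) *
        (diffPoly p c j κ).derivative.eval (σ i)) ^ 2 := by
  rw [deriv_xdiff p t c j hj]
  exact hq.integral_sq_eval_sub_div hγ hj <|
    (natDegree_derivative_le _).trans (Nat.sub_le_sub_right (natDegree_diffPoly_le c j hdeg κ) 1)

lemma integral_sq_xalg {ι : Type*} [Fintype ι] {σ γ : ι → ℝ}
    (hdeg : ∀ i < N, (p i).natDegree ≤ N - 1) (hj : t j < t (j + 1)) (hγ : ∀ i, 0 ≤ γ i)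
    (hq : IsExactQuad σ γ (2 * (N - 1))) (κ : Fin (m - k)) :
    ∫ s in t j..t (j + 1), xalg N m k n p t c j κ s ^ 2 =
      ∑ i, ((t (j + 1) - t j) ^ ((1 : ℝ) / 2) * √(γ i) * (algPoly p c j κ).eval (σ i)) ^ 2 := by
  rw [xalg_eq_eval_algPoly]
  exact hq.integral_sq_eval_sub_div hγ hj (natDegree_algPoly_le c j hdeg κ)

lemma integral_sq_xdiff_add_sq_deriv (hj : t j < t (j + 1)) (κ : Fin k) :
    ∫ s in t j..t (j + 1),
        (xdiff N m k n p t c j κ s ^ 2 + deriv (xdiff N m k n p t c j κ) s ^ 2) =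
      (∫ s in t j..t (j + 1), xdiff N m k n p t c j κ s ^ 2) +
        ∫ s in t j..t (j + 1), deriv (xdiff N m k n p t c j κ) s ^ 2 := by
  rw [deriv_xdiff p t c j hj, xdiff_eq_mul_eval_diffPoly]
  exact intervalIntegral.integral_add (Continuous.intervalIntegrable (by fun_prop) _ _)
    (Continuous.intervalIntegrable (by fun_prop) _ _)

end ComponentNorms

section Isometry

variable {N m k n : ℕ} {t : ℕ → ℝ} {p : ℕ → ℝ[X]} {σ γ : Fin N → ℝ} {σb γb : Fin (N + 1) → ℝ}

theorem normL2sq_eq_sum_sq_Umat_mulVec (hmono : ∀ j < n, t j < t (j + 1))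
    (hdeg : ∀ i < N, (p i).natDegree ≤ N - 1) (hγ : ∀ i, 0 ≤ γ i) (hγb : ∀ i, 0 ≤ γb i)
    (hq : IsExactQuad σ γ (2 * (N - 1))) (hqb : IsExactQuad σb γb (2 * N))
    (c : UIdx N m k n → ℝ) :
    normL2sq N m k n p t c =
      ∑ i, (Umat N m k n p (fun j => t (j + 1) - t j) σ γ σb γb).mulVec c i ^ 2 := by
  rw [normL2sq, Fintype.sum_prod_type]
  refine Finset.sum_congr rfl fun j _ => ?_
  have hj := hmono j j.2
  simp only [Fintype.sum_sum_type, Fintype.sum_prod_type, Umat_mulVec_inl, Umat_mulVec_inr,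
    integral_sq_xdiff c hdeg hj hγb hqb, integral_sq_xalg c hdeg hj hγ hq]

theorem normH1sq_eq_sum_sq_Uhmat_mulVec (hmono : ∀ j < n, t j < t (j + 1))
    (hdeg : ∀ i < N, (p i).natDegree ≤ N - 1) (hγ : ∀ i, 0 ≤ γ i) (hγb : ∀ i, 0 ≤ γb i)
    (hq : IsExactQuad σ γ (2 * (N - 1))) (hqb : IsExactQuad σb γb (2 * N))
    (c : UIdx N m k n → ℝ) :
    normH1sq N m k n p t c =
      ∑ i, (Uhmat N m k n p (fun j => t (j + 1) - t j) σ γ σb γb).mulVec c i ^ 2 := by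
  have hqb' : IsExactQuad σb γb (2 * (N - 1)) := hqb.mono (by lia)
  rw [normH1sq, Fintype.sum_prod_type]
  refine Finset.sum_congr rfl fun j _ => ?_
  have hj := hmono j j.2
  simp only [Fintype.sum_sum_type, Fintype.sum_prod_type, Uhmat_mulVec_inl_inl,
    Uhmat_mulVec_inl_inr, Uhmat_mulVec_inr, integral_sq_xdiff_add_sq_deriv c hj,
    integral_sq_xdiff c hdeg hj hγb hqb, integral_sq_deriv_xdiff c hdeg hj hγb hqb',
    integral_sq_xalg c hdeg hj hγ hq]

end Isometry

theorem stmt3_general (N m k n : ℕ) (t : ℕ → ℝ) (hmono : ∀ j < n, t j < t (j + 1))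
    (p : ℕ → ℝ[X]) (hdeg : ∀ i < N, (p i).natDegree ≤ N - 1)
    (σ γ : Fin N → ℝ) (σb γb : Fin (N + 1) → ℝ) (hγ : ∀ i, 0 ≤ γ i) (hγb : ∀ i, 0 ≤ γb i)
    (hq : IsExactQuad σ γ (2 * N - 2)) (hqb : IsExactQuad σb γb (2 * N))
    (c : UIdx N m k n → ℝ) :
    normL2sq N m k n p t c =
        ∑ i, (Umat N m k n p (fun j => t (j + 1) - t j) σ γ σb γb).mulVec c i ^ 2 ∧
      normH1sq N m k n p t c =
        ∑ i, (Uhmat N m k n p (fun j => t (j + 1) - t j) σ γ σb γb).mulVec c i ^ 2 := by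
  rw [← Nat.mul_sub_one] at hq
  exact ⟨normL2sq_eq_sum_sq_Umat_mulVec hmono hdeg hγ hγb hq hqb c,
    normH1sq_eq_sum_sq_Uhmat_mulVec hmono hdeg hγ hγb hq hqb c⟩

theorem stmt3 (N m k n : ℕ) (hN : 1 ≤ N) (hk : 1 ≤ k) (hkm : k < m) (hn : 1 ≤ n)
    (t : ℕ → ℝ) (hmono : ∀ j < n, t j < t (j + 1))
    (p : ℕ → Polynomial ℝ)
    (hdeg : ∀ i < N, (p i).natDegree ≤ N - 1)
    (hli : LinearIndependent ℝ fun i : Fin N => p i)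
    (σ γ : Fin N → ℝ) (σb γb : Fin (N + 1) → ℝ)
    (hq : IsQuad σ γ (2 * N - 2)) (hqb : IsQuad σb γb (2 * N)) :
    ∀ c : UIdx N m k n → ℝ,
      normL2sq N m k n p t c
        = ∑ i, ((Umat N m k n p (fun j => t ((j : ℕ) + 1) - t (j : ℕ)) σ γ σb γb).mulVec c i) ^ 2 ∧
      normH1sq N m k n p t c
        = ∑ i, ((Uhmat N m k n p (fun j => t ((j : ℕ) + 1) - t (j : ℕ)) σ γ σb γb).mulVec c i) ^ 2 := by
  exact stmt3_general N m k n t hmono p hdeg σ γ σb γb (fun i => (hq.2.2.1 i).le)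
    (fun i => (hqb.2.2.1 i).le) hq.2.2.2 hqb.2.2.2
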